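/- arXiv:2602.06693 — 5 statements merged into one kernel-verified Lean document; each statement's English description precedes it below -/
import Mathlib

section
/- Consider an SL instance in which the adjacency relation is complete bipartite, r j = ℓ j = r' j = 0 and d j = 1 for all clients j, p' i j = 0 for all i, j, and the T2 processing times do not depend on the helper, i.e., p i j = q j for some q : J → ℕ. Then for every k ∈ ℕ there exists a feasible SL schedule with makespan at most k if and only if there exists an assignment Y : J → I with |{j : Y j = i}| ≤ M i and ∑_{j : Y j = i} q j ≤ k for every helper i. -/
/-- Feasibility of an SL schedule `(Y, s, s')` for an SL instance: `Y` respects the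
adjacency relation `E` and the memory capacities `M` (w.r.t. demands `d`), the T2 of
client `j` starts no earlier than its release time `r j`, its T4 starts no earlier
than `ℓ j` slots after its T2 completes, and for distinct clients assigned to the
same helper the T2/T4 processing intervals are pairwise disjoint. -/
def SLFeasible {J I : Type*} [Fintype J] [DecidableEq I]
    (E : J → I → Prop) (M : I → ℕ) (d : J → ℕ) (r ℓ : J → ℕ) (p p' : I → J → ℕ)
    (Y : J → I) (s s' : J → ℕ) : Prop :=
  (∀ j : J, E j (Y j)) ∧
  (∀ i : I, ∑ j ∈ Finset.univ.filter (fun j => Y j = i), d j ≤ M i) ∧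
  (∀ j : J, r j ≤ s j) ∧
  (∀ j : J, s j + p (Y j) j + ℓ j ≤ s' j) ∧
  (∀ j j' : J, j ≠ j' → Y j = Y j' →
    Disjoint (Set.Ico (s j) (s j + p (Y j) j))
      (Set.Ico (s j') (s j' + p (Y j') j')) ∧
    Disjoint (Set.Ico (s j) (s j + p (Y j) j))
      (Set.Ico (s' j') (s' j' + p' (Y j') j')) ∧
    Disjoint (Set.Ico (s' j) (s' j + p' (Y j) j))
      (Set.Ico (s j') (s j' + p (Y j') j')) ∧
    Disjoint (Set.Ico (s' j) (s' j + p' (Y j) j))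
      (Set.Ico (s' j') (s' j' + p' (Y j') j')))

/-- The makespan of an SL schedule: the maximum over clients `j` of the completion
time `c j = s' j + p' (Y j) j + r' j`. -/
def SLMakespan {J I : Type*} [Fintype J]
    (r' : J → ℕ) (p' : I → J → ℕ) (Y : J → I) (s' : J → ℕ) : ℕ :=
  Finset.univ.sup (fun j => s' j + p' (Y j) j + r' j)

/-- Restricted SL instances (complete bipartite adjacency, `r = ℓ = r' = 0`,
unit demands, `p' = 0`, helper-independent T2 times `q`): a feasible SL schedule of
makespan at most `k` exists iff there is an assignment respecting the cardinality
capacities whose total T2 time on each helper is at most `k`. -/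
theorem sl_restricted_iff_capacitated_assignment {J I : Type*}
    [Fintype J] [Fintype I] [Nonempty J] [Nonempty I] [DecidableEq I]
    (E : J → I → Prop) (M : I → ℕ) (d : J → ℕ) (r ℓ r' : J → ℕ)
    (p p' : I → J → ℕ) (q : J → ℕ)
    (hE : ∀ j i, E j i) (hr : ∀ j, r j = 0) (hℓ : ∀ j, ℓ j = 0)
    (hr' : ∀ j, r' j = 0) (hd : ∀ j, d j = 1)
    (hp' : ∀ i j, p' i j = 0) (hp : ∀ i j, p i j = q j) (k : ℕ) :
    (∃ (Y : J → I) (s s' : J → ℕ),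
      SLFeasible E M d r ℓ p p' Y s s' ∧ SLMakespan r' p' Y s' ≤ k) ↔
    (∃ Y : J → I, ∀ i : I,
      (Finset.univ.filter (fun j => Y j = i)).card ≤ M i ∧
      ∑ j ∈ Finset.univ.filter (fun j => Y j = i), q j ≤ k) := by
  classical
  constructor
  · rintro ⟨Y, s, s', ⟨_, hM, _, hs, hdis⟩, hk⟩
    refine ⟨Y, fun i => ⟨?_, ?_⟩⟩
    · simpa [hd] using hM i
    · have hsub : (Finset.univ.filter (fun j => Y j = i)).biUnion
          (fun j => Finset.Ico (s j) (s j + q j)) ⊆ Finset.range k := by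
        intro t ht
        simp only [Finset.mem_biUnion, Finset.mem_Ico, Finset.mem_range] at ht ⊢
        obtain ⟨j, _, _, h2⟩ := ht
        have h3 : s' j + p' (Y j) j + r' j ≤ k :=
          le_trans (Finset.le_sup (f := fun j => s' j + p' (Y j) j + r' j)
            (Finset.mem_univ j)) hk
        have h4 := hs j
        rw [hp] at h4
        omega
      have hc := Finset.card_le_card hsub
      rw [Finset.card_biUnion] at hc
      · simpa using hc
      · intro j hj j' hj' hne
        have hj1 : Y j = i := by simpa using hj
        have hj2 : Y j' = i := by simpa using hj'
        have h := (hdis j j' hne (hj1.trans hj2.symm)).1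
        rw [hp, hp] at h
        rw [Function.onFun, ← Finset.disjoint_coe]
        simpa using h
  · rintro ⟨Y, hY⟩
    let e := Fintype.equivFin J
    let s : J → ℕ := fun j =>
      ∑ x ∈ Finset.univ.filter (fun x => Y x = Y j ∧ e x < e j), q x
    have hins : ∀ (j : J) (T : Finset J),
        (∀ x, (Y x = Y j ∧ e x < e j) ∨ x = j → x ∈ T) → s j + q j ≤ ∑ x ∈ T, q x := by
      intro j T hT
      have hnot : j ∉ Finset.univ.filter (fun x => Y x = Y j ∧ e x < e j) := by simp
      have h : s j + q j = ∑ x ∈ insert j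
          (Finset.univ.filter (fun x => Y x = Y j ∧ e x < e j)), q x := by
        rw [Finset.sum_insert hnot, add_comm]
      rw [h]
      apply Finset.sum_le_sum_of_subset
      intro x hx
      apply hT
      simp only [Finset.mem_insert, Finset.mem_filter, Finset.mem_univ, true_and] at hx
      exact hx.symm
    have hlt : ∀ j j' : J, Y j = Y j' → e j < e j' → s j + q j ≤ s j' := by
      intro j j' h1 h2
      apply hins
      rintro x (⟨h3, h4⟩ | rfl)
      · simpa using ⟨h3.trans h1, h4.trans h2⟩
      · simpa using ⟨h1, h2⟩
    refine ⟨Y, s, fun j => s j + q j, ⟨fun j => hE _ _, ?_, ?_, ?_, ?_⟩, ?_⟩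
    · intro i
      simpa [hd] using (hY i).1
    · intro j
      simp [hr]
    · intro j
      simp [hp, hℓ]
    · intro j j' hne h
      simp only [hp, hp', add_zero, Set.Ico_self, Set.disjoint_empty, Set.empty_disjoint,
        and_true]
      rw [Set.disjoint_left]
      intro t ht ht'
      rw [Set.mem_Ico] at ht ht'
      rcases lt_trichotomy (e j) (e j') with h1 | h1 | h1
      · have := hlt j j' h h1
        omega
      · exact hne (e.injective h1)
      · have := hlt j' j h.symm h1
        omega
    · apply Finset.sup_le
      intro j _
      simp only [hp', hr', add_zero]
      refine le_trans (hins j _ ?_) (hY (Y j)).2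
      rintro x (⟨h3, _⟩ | rfl)
      · simpa using h3
      · simp
end

section
/- Consider an SL instance in which the adjacency relation is complete bipartite, r j = ℓ j = r' j = 0 and d j = 1 for all clients j, p' i j = 0 for all i, j, and M i ≥ |J| for every helper i. Then for every k ∈ ℕ there exists a feasible SL schedule with makespan at most k if and only if there exists an assignment σ : J → I with ∑_{j : σ j = i} p i j ≤ k for every helper i; that is, the restricted SL instance has the same optimal makespan as the R||C_max instance with jobs J, machines I, and processing times p. -/
/-- Restricted SL instances (complete bipartite adjacency, `r = ℓ = r' = 0`,
unit demands, `p' = 0`, capacities at least `|J|`): a feasible SL schedule of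
makespan at most `k` exists iff the R||C_max instance `(J, I, p)` admits an
assignment with load at most `k` on every machine. -/
theorem sl_restricted_iff_rcmax {J I : Type*}
    [Fintype J] [Fintype I] [Nonempty J] [Nonempty I] [DecidableEq I]
    (E : J → I → Prop) (M : I → ℕ) (d : J → ℕ) (r ℓ r' : J → ℕ)
    (p p' : I → J → ℕ)
    (hE : ∀ j i, E j i) (hr : ∀ j, r j = 0) (hℓ : ∀ j, ℓ j = 0)
    (hr' : ∀ j, r' j = 0) (hd : ∀ j, d j = 1)
    (hp' : ∀ i j, p' i j = 0) (hM : ∀ i : I, Fintype.card J ≤ M i) (k : ℕ) :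
    (∃ (Y : J → I) (s s' : J → ℕ),
      SLFeasible E M d r ℓ p p' Y s s' ∧ SLMakespan r' p' Y s' ≤ k) ↔
    (∃ σ : J → I, ∀ i : I,
      ∑ j ∈ Finset.univ.filter (fun j => σ j = i), p i j ≤ k) := by
  classical
  constructor
  · rintro ⟨Y, s, s', ⟨-, -, -, h4, h5⟩, hk⟩
    refine ⟨Y, fun i => ?_⟩
    have hc : ∀ j, s j + p (Y j) j ≤ k := by
      intro j
      have h1 : s' j + p' (Y j) j + r' j ≤ SLMakespan r' p' Y s' :=
        Finset.le_sup (f := fun j => s' j + p' (Y j) j + r' j) (Finset.mem_univ j)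
      have h2 := h4 j
      omega
    have hcard : ((Finset.univ.filter (fun j => Y j = i)).biUnion
        (fun j => Finset.Ico (s j) (s j + p (Y j) j))).card
        = ∑ j ∈ Finset.univ.filter (fun j => Y j = i), p i j := by
      rw [Finset.card_biUnion]
      · apply Finset.sum_congr rfl
        intro j hj
        have hj' : Y j = i := by simpa using hj
        simp [hj']
      · intro a ha b hb hab
        have ha' : Y a = i := by simpa using ha
        have hb' : Y b = i := by simpa using hb
        have h := (h5 a b hab (ha'.trans hb'.symm)).1
        rw [Function.onFun, ← Finset.disjoint_coe, Finset.coe_Ico, Finset.coe_Ico]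
        exact h
    rw [← hcard, ← Finset.card_range k]
    apply Finset.card_le_card
    intro x hx
    simp only [Finset.mem_biUnion, Finset.mem_Ico] at hx
    obtain ⟨j, -, hj⟩ := hx
    have := hc j
    simp only [Finset.mem_range]
    omega
  · rintro ⟨σ, hσ⟩
    let e := Fintype.equivFin J
    let s : J → ℕ := fun j =>
      ∑ a ∈ Finset.univ.filter (fun a => σ a = σ j ∧ e a < e j), p (σ j) a
    have key : ∀ (j : J) (T : Finset J),
        (∀ a, σ a = σ j → e a < e j → a ∈ T) → j ∈ T →
        s j + p (σ j) j ≤ ∑ a ∈ T, p (σ j) a := by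
      intro j T hT hj
      have hn : j ∉ Finset.univ.filter (fun a => σ a = σ j ∧ e a < e j) := by simp
      rw [add_comm, ← Finset.sum_insert hn (f := fun a => p (σ j) a)]
      apply Finset.sum_le_sum_of_subset
      intro a ha
      simp only [Finset.mem_insert, Finset.mem_filter, Finset.mem_univ, true_and] at ha
      rcases ha with rfl | ⟨h1, h2⟩
      · exact hj
      · exact hT a h1 h2
    have hlt : ∀ a b, σ a = σ b → e a < e b → s a + p (σ a) a ≤ s b := by
      intro a b hab hlt
      have := key a (Finset.univ.filter (fun c => σ c = σ b ∧ e c < e b))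
        (fun c h1 h2 => by simp [h1, hab, h2.trans hlt]) (by simp [hab, hlt])
      rw [hab] at this
      rw [hab]
      exact this
    refine ⟨σ, s, fun j => s j + p (σ j) j, ⟨fun j => hE _ _, ?_, ?_, ?_, ?_⟩, ?_⟩
    · intro i
      simp only [hd, Finset.sum_const, smul_eq_mul, mul_one]
      exact (Finset.card_le_univ _).trans (hM i)
    · intro j
      simp [hr]
    · intro j
      simp [hℓ]
    · intro a b hab h
      simp only [hp', add_zero, Set.Ico_self, Set.disjoint_empty, Set.empty_disjoint, and_true]
      have hne : e a ≠ e b := fun h => hab (e.injective h)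
      rw [Set.disjoint_left]
      intro x hx hy
      simp only [Set.mem_Ico] at hx hy
      rcases lt_or_gt_of_ne hne with h1 | h1
      · have := hlt a b h h1
        omega
      · have := hlt b a h.symm h1
        omega
    · unfold SLMakespan
      apply Finset.sup_le
      intro j _
      simp only [hp', hr', add_zero]
      exact (key j (Finset.univ.filter (fun a => σ a = σ j))
        (fun a h1 _ => by simp [h1]) (by simp)).trans (hσ (σ j))
end

section
/- Let ι be an SL instance in which r j = ℓ j = r' j = 0 for all clients j. Then ι admits a feasible SL schedule with makespan at most k if and only if there exists a feasible assignment Y with max_{i ∈ I} ∑_{j : Y j = i} (p i j + p' i j) ≤ k. In particular, if a feasible assignment exists, the minimum makespan of ι equals the minimum over all feasible assignments Y of max_{i ∈ I} ∑_{j : Y j = i} (p i j + p' i j). -/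
/-- For an SL instance with `r = ℓ = r' = 0`, a feasible SL schedule of makespan at
most `k` exists iff there is a feasible assignment `Y` with
`max_{i ∈ I} ∑_{j : Y j = i} (p i j + p' i j) ≤ k`. -/
theorem sl_zeroed_makespan_iff_assignment_load {J I : Type*}
    [Fintype J] [Fintype I] [Nonempty J] [Nonempty I] [DecidableEq I]
    (E : J → I → Prop) (M : I → ℕ) (d : J → ℕ) (r ℓ r' : J → ℕ)
    (p p' : I → J → ℕ)
    (hr : ∀ j, r j = 0) (hℓ : ∀ j, ℓ j = 0) (hr' : ∀ j, r' j = 0) (k : ℕ) :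
    (∃ (Y : J → I) (s s' : J → ℕ),
      SLFeasible E M d r ℓ p p' Y s s' ∧ SLMakespan r' p' Y s' ≤ k) ↔
    (∃ Y : J → I,
      (∀ j : J, E j (Y j)) ∧
      (∀ i : I, ∑ j ∈ Finset.univ.filter (fun j => Y j = i), d j ≤ M i) ∧
      Finset.univ.sup
        (fun i => ∑ j ∈ Finset.univ.filter (fun j => Y j = i), (p i j + p' i j)) ≤ k) := by
  classical
  constructor
  · rintro ⟨Y, s, s', ⟨hE, hM, -, hs, hdis⟩, hk⟩
    refine ⟨Y, hE, hM, ?_⟩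
    rw [Finset.sup_le_iff]
    intro i _
    have hk' : ∀ j, s' j + p' (Y j) j ≤ k := by
      intro j
      have h := (Finset.sup_le_iff.mp hk) j (Finset.mem_univ j)
      simp only [hr'] at h
      simpa using h
    let A : J → Finset ℕ := fun j =>
      Finset.Ico (s j) (s j + p (Y j) j) ∪ Finset.Ico (s' j) (s' j + p' (Y j) j)
    have hA : ∀ j, (A j).card = p (Y j) j + p' (Y j) j := by
      intro j
      have h := hs j
      rw [Finset.card_union_of_disjoint]
      · simp
      · rw [Finset.disjoint_left]
        intro x hx hx'
        simp only [Finset.mem_Ico] at hx hx'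
        omega
    have hsum : ∑ j ∈ Finset.univ.filter (fun j => Y j = i), (p i j + p' i j)
        = ∑ j ∈ Finset.univ.filter (fun j => Y j = i), (A j).card := by
      apply Finset.sum_congr rfl
      intro j hj
      rw [Finset.mem_filter] at hj
      rw [hA, hj.2]
    rw [hsum, ← Finset.card_biUnion]
    · calc _ ≤ (Finset.range k).card := by
            apply Finset.card_le_card
            intro x hx
            obtain ⟨j, -, hx⟩ := Finset.mem_biUnion.mp hx
            have h1 := hs j
            have h2 := hk' j
            simp only [A, Finset.mem_union, Finset.mem_Ico] at hx
            rw [Finset.mem_range]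
            omega
        _ = k := Finset.card_range k
    · intro j hj j' hj' hne
      have hj := (Finset.mem_filter.mp hj).2
      have hj' := (Finset.mem_filter.mp hj').2
      obtain ⟨h1, h2, h3, h4⟩ := hdis j j' hne (hj.trans hj'.symm)
      rw [Function.onFun, Finset.disjoint_left]
      intro x hx hx'
      simp only [A, Finset.mem_union, Finset.mem_Ico] at hx hx'
      rcases hx with hx | hx <;> rcases hx' with hx' | hx'
      · exact Set.disjoint_left.mp h1 hx hx'
      · exact Set.disjoint_left.mp h2 hx hx'
      · exact Set.disjoint_left.mp h3 hx hx'
      · exact Set.disjoint_left.mp h4 hx hx'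
  · rintro ⟨Y, hE, hM, hk⟩
    let e := Fintype.equivFin J
    let w : J → ℕ := fun j => p (Y j) j + p' (Y j) j
    let s : J → ℕ := fun j =>
      ∑ x ∈ Finset.univ.filter (fun x => Y x = Y j ∧ e x < e j), w x
    have hins : ∀ j (T : Finset J), (∀ x, Y x = Y j → e x ≤ e j → x ∈ T) →
        s j + w j ≤ ∑ x ∈ T, w x := by
      intro j T hT
      have hn : j ∉ Finset.univ.filter (fun x => Y x = Y j ∧ e x < e j) := by simp
      have h := Finset.sum_insert (f := w) hn
      have h2 : s j + w j = ∑ x ∈ insert j (Finset.univ.filter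
          (fun x => Y x = Y j ∧ e x < e j)), w x := by
        rw [h, add_comm]
      rw [h2]
      apply Finset.sum_le_sum_of_subset
      intro x hx
      rw [Finset.mem_insert, Finset.mem_filter] at hx
      rcases hx with rfl | ⟨-, h1, h2⟩
      · exact hT _ rfl le_rfl
      · exact hT _ h1 h2.le
    have hlt : ∀ j j', Y j = Y j' → e j < e j' → s j + w j ≤ s j' := by
      intro j j' hY hlt
      apply hins
      intro x h1 h2
      simp only [Finset.mem_filter, Finset.mem_univ, true_and]
      exact ⟨h1.trans hY, lt_of_le_of_lt h2 hlt⟩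
    refine ⟨Y, s, fun j => s j + p (Y j) j, ⟨hE, hM, ?_, ?_, ?_⟩, ?_⟩
    · intro j
      simp [hr]
    · intro j
      simp [hℓ]
    · intro j j' hne hY
      have key : s j + w j ≤ s j' ∨ s j' + w j' ≤ s j := by
        rcases lt_or_gt_of_ne (fun h => hne (e.injective h)) with h | h
        · exact Or.inl (hlt _ _ hY h)
        · exact Or.inr (hlt _ _ hY.symm h)
      simp only [w] at key
      refine ⟨?_, ?_, ?_, ?_⟩ <;>
      · rw [Set.disjoint_left]
        intro x hx hx'
        simp only [Set.mem_Ico] at hx hx'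
        omega
    · unfold SLMakespan
      rw [Finset.sup_le_iff]
      intro j _
      have h := (Finset.sup_le_iff.mp hk) (Y j) (Finset.mem_univ _)
      have h2 := hins j (Finset.univ.filter (fun x => Y x = Y j)) (by
        intro x hx _
        simpa using hx)
      have h3 : ∑ x ∈ Finset.univ.filter (fun x => Y x = Y j), w x
          = ∑ x ∈ Finset.univ.filter (fun x => Y x = Y j), (p (Y j) x + p' (Y j) x) := by
        apply Finset.sum_congr rfl
        intro x hx
        rw [Finset.mem_filter] at hx
        simp only [w, hx.2]
      simp only [hr', w] at *
      omega
end

section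
/- Let ι be an SL instance and Y : J → I any feasible assignment for ι. Then there exists a feasible SL schedule for ι with assignment Y whose makespan is at most max_{i ∈ I} ∑_{j : Y j = i} (p i j + p' i j) + max_{j ∈ J} r j + max_{j ∈ J} ℓ j + max_{j ∈ J} r' j. -/
/-- Existence of a back-to-back ordering of the clients on each helper. -/
lemma sl_prefix {J I : Type*} [Fintype J] [DecidableEq I] (Y : J → I) (f : J → ℕ)
    (w : I → J → ℕ) :
    ∃ a : J → ℕ,
      (∀ j, a j + w (Y j) j ≤ ∑ k ∈ Finset.univ.filter (fun k => Y k = Y j), w (Y j) k) ∧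
      (∀ j j', Y j = Y j' → f j < f j' → a j + w (Y j) j ≤ a j') := by
  classical
  have key : ∀ (j : J) (S : Finset J), j ∈ S →
      (Finset.univ.filter (fun k => Y k = Y j ∧ f k < f j)) ⊆ S →
      ∑ k ∈ Finset.univ.filter (fun k => Y k = Y j ∧ f k < f j), w (Y j) k + w (Y j) j
        ≤ ∑ k ∈ S, w (Y j) k := by
    intro j S hj hS
    rw [add_comm, ← Finset.sum_insert (by simp)]
    exact Finset.sum_le_sum_of_subset (Finset.insert_subset hj hS)
  refine ⟨fun j => ∑ k ∈ Finset.univ.filter (fun k => Y k = Y j ∧ f k < f j), w (Y j) k,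
    ?_, ?_⟩
  · intro j
    apply key j _ (by simp)
    intro k hk
    simp at hk ⊢
    exact hk.1
  · intro j j' hY hf
    have := key j (Finset.univ.filter (fun k => Y k = Y j' ∧ f k < f j')) (by simp [hY, hf])
      (by
        intro k hk
        simp at hk ⊢
        exact ⟨hk.1.trans hY, hk.2.trans hf⟩)
    simpa only [hY] using this

lemma sl_disj {a b c e : ℕ} (h : b ≤ c ∨ e ≤ a) :
    Disjoint (Set.Ico a b) (Set.Ico c e) := by
  rw [Set.disjoint_left]
  intro x hx hy
  simp only [Set.mem_Ico] at hx hy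
  omega

/-- Upper-bound lemma for the 5-approximation algorithm: every feasible assignment
`Y` can be completed to a feasible SL schedule whose makespan is at most
`max_{i} ∑_{j : Y j = i} (p i j + p' i j) + max_j r j + max_j ℓ j + max_j r' j`. -/
theorem sl_schedule_from_assignment_upper_bound {J I : Type*}
    [Fintype J] [Fintype I] [Nonempty J] [Nonempty I] [DecidableEq I]
    (E : J → I → Prop) (M : I → ℕ) (d : J → ℕ) (r ℓ r' : J → ℕ)
    (p p' : I → J → ℕ) (Y : J → I)
    (hYE : ∀ j : J, E j (Y j))
    (hYM : ∀ i : I, ∑ j ∈ Finset.univ.filter (fun j => Y j = i), d j ≤ M i) :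
    ∃ s s' : J → ℕ,
      SLFeasible E M d r ℓ p p' Y s s' ∧
      SLMakespan r' p' Y s' ≤
        Finset.univ.sup
          (fun i => ∑ j ∈ Finset.univ.filter (fun j => Y j = i), (p i j + p' i j)) +
        Finset.univ.sup r + Finset.univ.sup ℓ + Finset.univ.sup r' := by
  classical
  obtain ⟨f, hf⟩ : ∃ f : J → ℕ, Function.Injective f :=
    ⟨fun j => (Fintype.equivFin J j : ℕ), fun a b h =>
      (Fintype.equivFin J).injective (Fin.ext h)⟩
  obtain ⟨a, ha1, ha2⟩ := sl_prefix Y f p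
  obtain ⟨b, hb1, hb2⟩ := sl_prefix Y f p'
  set R := Finset.univ.sup r with hR
  set L := Finset.univ.sup ℓ with hL
  have hr : ∀ j, r j ≤ R := fun j => Finset.le_sup (f := r) (Finset.mem_univ j)
  have hl : ∀ j, ℓ j ≤ L := fun j => Finset.le_sup (f := ℓ) (Finset.mem_univ j)
  obtain ⟨P, hP⟩ : ∃ P : I → ℕ,
      ∀ i, P i = ∑ k ∈ Finset.univ.filter (fun k => Y k = i), p i k := ⟨_, fun _ => rfl⟩
  simp only [← hP] at ha1
  refine ⟨fun j => R + a j, fun j => R + P (Y j) + L + b j,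
    ⟨hYE, hYM, ?_, ?_, ?_⟩, ?_⟩
  · intro j
    have := hr j
    dsimp only
    omega
  · intro j
    have := hl j
    have := ha1 j
    dsimp only
    omega
  · intro j j' hne hY
    have h1 := ha1 j
    have h2 := ha1 j'
    have hPP : P (Y j) = P (Y j') := by rw [hY]
    have hlt : f j < f j' ∨ f j' < f j := lt_or_gt_of_ne (fun h => hne (hf h))
    refine ⟨sl_disj ?_, sl_disj ?_, sl_disj ?_, sl_disj ?_⟩
    all_goals dsimp only
    · rcases hlt with h | h
      · have := ha2 j j' hY h
        omega
      · have := ha2 j' j hY.symm h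
        omega
    · omega
    · omega
    · rcases hlt with h | h
      · have := hb2 j j' hY h
        omega
      · have := hb2 j' j hY.symm h
        omega
  · unfold SLMakespan
    refine Finset.sup_le fun j _ => ?_
    have h1 := hb1 j
    have h2 : r' j ≤ Finset.univ.sup r' := Finset.le_sup (f := r') (Finset.mem_univ j)
    have h3 := Finset.le_sup (f := fun i => ∑ j ∈ Finset.univ.filter (fun j => Y j = i),
      (p i j + p' i j)) (Finset.mem_univ (Y j))
    simp only [Finset.sum_add_distrib, ← hP] at h3 ⊢
    omega
end

section
/- Let ι be an SL instance that admits at least one feasible SL schedule, let OPT* denote the minimum makespan over all feasible SL schedules of ι, and let L_min denote the minimum over all feasible assignments Y of max_{i ∈ I} ∑_{j : Y j = i} (p i j + p' i j). Then for every feasible assignment Y₀ with max_{i ∈ I} ∑_{j : Y₀ j = i} (p i j + p' i j) ≤ 2 · L_min, there exists a feasible SL schedule for ι with assignment Y₀ whose makespan is at most 5 · OPT*. -/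
/-- Load of the clients preceding `j` on the same helper. -/
noncomputable def slPre {J I : Type*} [Fintype J] [DecidableEq I] (Y : J → I) (e : J → ℕ) (w : I → J → ℕ)
    (j : J) : ℕ :=
  ∑ k ∈ Finset.univ.filter (fun k => Y k = Y j ∧ e k < e j), w (Y j) k

theorem slPre_step {J I : Type*} [Fintype J] [DecidableEq I] (Y : J → I) (e : J → ℕ) (w : I → J → ℕ)
    (j k : J) (hY : Y j = Y k) (h : e j < e k) :
    slPre Y e w j + w (Y j) j ≤ slPre Y e w k := by
  classical
  unfold slPre
  have hn : j ∉ Finset.univ.filter (fun l => Y l = Y j ∧ e l < e j) := by simp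
  rw [add_comm, ← hY, ← Finset.sum_insert hn]
  apply Finset.sum_le_sum_of_subset
  intro l hl
  simp only [Finset.mem_insert, Finset.mem_filter, Finset.mem_univ, true_and] at hl ⊢
  rcases hl with rfl | ⟨h1, h2⟩
  · exact ⟨rfl, h⟩
  · exact ⟨h1, h2.trans h⟩

theorem slPre_le {J I : Type*} [Fintype J] [DecidableEq I] (Y : J → I) (e : J → ℕ)
    (w : I → J → ℕ) (j : J) :
    slPre Y e w j + w (Y j) j ≤ ∑ k ∈ Finset.univ.filter (fun k => Y k = Y j), w (Y j) k := by
  classical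
  unfold slPre
  have hn : j ∉ Finset.univ.filter (fun l => Y l = Y j ∧ e l < e j) := by simp
  rw [add_comm, ← Finset.sum_insert hn]
  apply Finset.sum_le_sum_of_subset
  intro l hl
  simp only [Finset.mem_insert, Finset.mem_filter, Finset.mem_univ, true_and] at hl ⊢
  rcases hl with rfl | ⟨h1, h2⟩
  · rfl
  · exact h1

theorem sl_Ico_disj {a b c d : ℕ} (h : b ≤ c ∨ d ≤ a) :
    Disjoint (Set.Ico a b) (Set.Ico c d) := by
  rw [Set.disjoint_left]
  intro x hx hy
  simp only [Set.mem_Ico] at hx hy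
  omega

theorem sl_load_le {J I : Type*} [Fintype J] [DecidableEq I]
    (E : J → I → Prop) (M : I → ℕ) (d : J → ℕ) (r ℓ r' : J → ℕ) (p p' : I → J → ℕ)
    (Y : J → I) (s s' : J → ℕ) (h : SLFeasible E M d r ℓ p p' Y s s') (i : I) :
    ∑ j ∈ Finset.univ.filter (fun j => Y j = i), (p i j + p' i j) ≤ SLMakespan r' p' Y s' := by
  classical
  obtain ⟨-, -, -, h4, h5⟩ := h
  have hm : ∀ j, s' j + p' (Y j) j + r' j ≤ SLMakespan r' p' Y s' := fun j =>
    Finset.le_sup (f := fun j => s' j + p' (Y j) j + r' j) (Finset.mem_univ j)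
  let T : J → Finset ℕ := fun j =>
    Finset.Ico (s j) (s j + p (Y j) j) ∪ Finset.Ico (s' j) (s' j + p' (Y j) j)
  have hT : ∀ j, (T j).card = p (Y j) j + p' (Y j) j := by
    intro j
    have hd : Disjoint (Finset.Ico (s j) (s j + p (Y j) j))
        (Finset.Ico (s' j) (s' j + p' (Y j) j)) := by
      rw [Finset.disjoint_left]
      intro x hx hy
      simp only [Finset.mem_Ico] at hx hy
      have := h4 j
      omega
    simp only [T]
    rw [Finset.card_union_of_disjoint hd]
    simp
  have hdis : ∀ j ∈ Finset.univ.filter (fun j => Y j = i),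
      ∀ k ∈ Finset.univ.filter (fun j => Y j = i), j ≠ k → Disjoint (T j) (T k) := by
    intro j hj k hk hjk
    simp only [Finset.mem_filter, Finset.mem_univ, true_and] at hj hk
    obtain ⟨a, b, c, e⟩ := h5 j k hjk (hj.trans hk.symm)
    rw [Set.disjoint_left] at a b c e
    rw [Finset.disjoint_left]
    intro x hx hy
    simp only [T, Finset.mem_union, Finset.mem_Ico] at hx hy
    rcases hx with hx | hx <;> rcases hy with hy | hy
    · exact a hx hy
    · exact b hx hy
    · exact c hx hy
    · exact e hx hy
  have hc := Finset.card_biUnion hdis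
  have hsub : (Finset.univ.filter (fun j => Y j = i)).biUnion T ⊆
      Finset.range (SLMakespan r' p' Y s') := by
    intro x hx
    simp only [Finset.mem_biUnion, T, Finset.mem_union, Finset.mem_Ico] at hx
    obtain ⟨j, -, hx⟩ := hx
    have := h4 j
    have := hm j
    rw [Finset.mem_range]
    omega
  have hle := Finset.card_le_card hsub
  rw [hc, Finset.card_range] at hle
  refine le_trans (le_of_eq ?_) hle
  apply Finset.sum_congr rfl
  intro j hj
  rw [hT j, (Finset.mem_filter.mp hj).2]

/-- 5-approximation guarantee: if the SL instance admits a feasible schedule,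
`OPT` is its minimum makespan, and `Lmin` is the minimum over feasible assignments
of the maximum helper load `max_i ∑_{j : Y j = i} (p i j + p' i j)`, then every
feasible assignment `Y₀` whose maximum helper load is at most `2 * Lmin` can be
completed to a feasible SL schedule of makespan at most `5 * OPT`. -/
theorem sl_five_approximation {J I : Type*}
    [Fintype J] [Fintype I] [Nonempty J] [Nonempty I] [DecidableEq I]
    (E : J → I → Prop) (M : I → ℕ) (d : J → ℕ) (r ℓ r' : J → ℕ)
    (p p' : I → J → ℕ)
    (hfeas : ∃ (Y : J → I) (s s' : J → ℕ), SLFeasible E M d r ℓ p p' Y s s')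
    (OPT Lmin : ℕ)
    (hOPT : OPT = sInf {m : ℕ | ∃ (Y : J → I) (s s' : J → ℕ),
      SLFeasible E M d r ℓ p p' Y s s' ∧ SLMakespan r' p' Y s' = m})
    (hLmin : Lmin = sInf {m : ℕ | ∃ Y : J → I,
      (∀ j : J, E j (Y j)) ∧
      (∀ i : I, ∑ j ∈ Finset.univ.filter (fun j => Y j = i), d j ≤ M i) ∧
      Finset.univ.sup
        (fun i => ∑ j ∈ Finset.univ.filter (fun j => Y j = i), (p i j + p' i j)) = m})
    (Y₀ : J → I)
    (hY₀E : ∀ j : J, E j (Y₀ j))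
    (hY₀M : ∀ i : I, ∑ j ∈ Finset.univ.filter (fun j => Y₀ j = i), d j ≤ M i)
    (hY₀load : Finset.univ.sup
      (fun i => ∑ j ∈ Finset.univ.filter (fun j => Y₀ j = i), (p i j + p' i j)) ≤
        2 * Lmin) :
    ∃ s s' : J → ℕ,
      SLFeasible E M d r ℓ p p' Y₀ s s' ∧ SLMakespan r' p' Y₀ s' ≤ 5 * OPT := by
  obtain ⟨Yf, sf, sf', hf⟩ := hfeas
  have hmem : OPT ∈ {m : ℕ | ∃ (Y : J → I) (s s' : J → ℕ),
      SLFeasible E M d r ℓ p p' Y s s' ∧ SLMakespan r' p' Y s' = m} := by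
    rw [hOPT]
    exact Nat.sInf_mem ⟨_, Yf, sf, sf', hf, rfl⟩
  obtain ⟨Y, t, t', hY, hmk⟩ := hmem
  have hL : Lmin ≤ OPT := by
    rw [hLmin]
    refine le_trans (Nat.sInf_le ⟨Y, hY.1, hY.2.1, rfl⟩) ?_
    apply Finset.sup_le
    intro i _
    rw [← hmk]
    exact sl_load_le E M d r ℓ r' p p' Y t t' hY i
  have hb : ∀ j, r j ≤ OPT ∧ ℓ j ≤ OPT ∧ r' j ≤ OPT := by
    intro j
    have h1 : t' j + p' (Y j) j + r' j ≤ OPT := by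
      rw [← hmk]
      exact Finset.le_sup (f := fun j => t' j + p' (Y j) j + r' j) (Finset.mem_univ j)
    have h2 := hY.2.2.1 j
    have h3 := hY.2.2.2.1 j
    omega
  have hload : ∀ i, ∑ j ∈ Finset.univ.filter (fun j => Y₀ j = i), p i j +
      ∑ j ∈ Finset.univ.filter (fun j => Y₀ j = i), p' i j ≤ 2 * OPT := by
    intro i
    rw [← Finset.sum_add_distrib]
    have := (Finset.le_sup (f := fun i => ∑ j ∈ Finset.univ.filter (fun j => Y₀ j = i),
      (p i j + p' i j)) (Finset.mem_univ i)).trans hY₀load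
    omega
  let e : J → ℕ := fun j => (Fintype.equivFin J j : ℕ)
  have he : ∀ j k, j ≠ k → e j < e k ∨ e k < e j := by
    intro j k hjk
    apply Nat.lt_or_gt_of_ne
    intro h
    exact hjk ((Fintype.equivFin J).injective (Fin.ext h))
  refine ⟨fun j => OPT + slPre Y₀ e p j,
    fun j => OPT + ∑ k ∈ Finset.univ.filter (fun k => Y₀ k = Y₀ j), p (Y₀ j) k + OPT +
      slPre Y₀ e p' j, ⟨hY₀E, hY₀M, ?_, ?_, ?_⟩, ?_⟩
  · intro j
    have := hb j
    dsimp only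
    omega
  · intro j
    have := hb j
    have := slPre_le Y₀ e p j
    dsimp only
    omega
  · intro j k hjk hYjk
    have hj := slPre_le Y₀ e p j
    have hk := slPre_le Y₀ e p k
    have hs : ∀ w : I → J → ℕ, slPre Y₀ e w j + w (Y₀ j) j ≤ slPre Y₀ e w k ∨
        slPre Y₀ e w k + w (Y₀ k) k ≤ slPre Y₀ e w j := by
      intro w
      rcases he j k hjk with h | h
      · exact Or.inl (slPre_step Y₀ e w j k hYjk h)
      · exact Or.inr (slPre_step Y₀ e w k j hYjk.symm h)
    have h1 := hs p
    have h2 := hs p'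
    rw [← hYjk] at hk h1 h2
    dsimp only
    rw [← hYjk]
    refine ⟨sl_Ico_disj ?_, sl_Ico_disj ?_, sl_Ico_disj ?_, sl_Ico_disj ?_⟩ <;> omega
  · apply Finset.sup_le
    intro j _
    have := hb j
    have := hload (Y₀ j)
    have := slPre_le Y₀ e p' j
    dsimp only
    omega
end
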